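/- In the transversality setup with λ = 1 and f, T real analytic: either f is real analytically cohomologous to a constant (f = g∘T − g + c with g real analytic) and h_i ≡ h_j for all i, j ∈ Σ_d, or h_i ≢ h_j whenever i ≠ j in Σ_d. -/

import Mathlib

/-- Iterated inverse branches `τ_{i,n} = τ_{i_n} ∘ ⋯ ∘ τ_{i_1}`, `τ_j(x) = τ(x+j)`. -/
def tauIt (tau : ℝ → ℝ) (i : ℕ → ℕ) : ℕ → ℝ → ℝ
  | 0 => id
  | n + 1 => fun x => tau (tauIt tau i n x + i n)

/-- `h_i(x) = Σ_{n≥1} (f̂∘τ_{i,n}(x) − f̂∘τ_{i,n}(0))` (the case `λ = 1`). -/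
noncomputable def hFunR (tau : ℝ → ℝ) (fhat : ℝ → ℝ) (i : ℕ → ℕ) (x : ℝ) : ℝ :=
  ∑' n : ℕ, (fhat (tauIt tau i (n + 1) x) - fhat (tauIt tau i (n + 1) 0))

/-!
Since `τ(x + d) = τ(x) + 1`, the function `V_n = f ∘ τ^[n+1]` is `d^(n+1)`-periodic, and the
`n`-th term of `h_i` is `V_n(x + a_n) - V_n(a_n)` with `a_n = ∑_{m ≤ n} i_m d^m`. Thus `h_i = h_a`
for the `d`-adic integer `a = ∑ i_m d^m`, where `h_{a+m}(x) = h_a(x + m) - h_a(m)` for integers `m`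
and `h_a` depends continuously on `a`.

If `h_a = h_b` with `a ≠ b`, then translating and passing to limits gives `h_{t(b-a)} = h_0` for all
natural `t`. Averaging over `t` replaces `V_n` by its average over the translations by `c_n`, where
`c = b - a`. This average has period `gcd(c_n, d^(n+1))`, and since `V_n` has bounded variation over
its period `d^(n+1)`, uniformly in `n`, its oscillation is `O(gcd(c_n, d^(n+1)) / d^(n+1))`, which
decays geometrically because `c ≠ 0`. Hence `h_0` is a uniform limit of `d^N`-periodic functions and
`h_0(· + d^N) → h_0` uniformly. But `h_0(T^n x + d^n) - h_0(T^n x) = h_0(x + 1) - h_0(x)`, so `h_0`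
is 1-periodic. Then `h_a = h_0` for every `a`, and `f = h_0 ∘ T - h_0 + f(0)`. Complexifying the
series shows that `h_0` is analytic near the fixed point `0` of `τ`, and the cohomological equation
spreads analyticity to the whole line.
-/

open Filter Set
open scoped NNReal Topology

section Averages

lemma add_intCast_eq_of_modEq {E : Type*} {φ : ℝ → E} {P : ℕ} (hφ : Function.Periodic φ P)
    {a b : ℤ} (hab : a ≡ b [ZMOD P]) (x : ℝ) : φ (x + a) = φ (x + b) := by
  obtain ⟨k, hk⟩ := hab.dvd
  rw [eq_add_of_sub_eq' hk]
  push_cast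
  rw [← add_assoc, mul_comm, hφ.int_mul k]

lemma birkhoffSum_mul_of_iterate_comp_eq {α E : Type*} [AddCommMonoid E] {T : α → α} {φ : α → E}
    {P : ℕ} (h : φ ∘ T^[P] = φ) (r : ℕ) : birkhoffSum T φ (P * r) = r • birkhoffSum T φ P := by
  have hsum : birkhoffSum T φ P ∘ T^[P] = birkhoffSum T φ P := by
    ext x
    simp only [birkhoffSum, Function.comp_apply, ← Function.iterate_add_apply]
    refine Finset.sum_congr rfl fun k _ => ?_
    rw [add_comm, Function.iterate_add_apply]
    exact congrFun h _
  induction r with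
  | zero => simp
  | succ r ih =>
    ext x
    rw [Nat.mul_succ, add_comm, birkhoffSum_add, ih, succ_nsmul']
    simp only [Pi.add_apply, Pi.smul_apply]
    congr 2
    exact congrFun hsum x

lemma dist_birkhoffSum_add_right_le {E : Type*} [NormedAddCommGroup E] {φ : ℝ → E} {K : ℝ≥0}
    {g y z : ℝ} {N : ℕ} (hK : eVariationOn φ (Icc z (z + N * g)) ≤ K)
    (hy : y ∈ Icc z (z + g)) :
    dist (birkhoffSum (· + g) φ N y) (birkhoffSum (· + g) φ N z) ≤ K := by
  have hg : 0 ≤ g := by linarith [hy.1.trans hy.2]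
  have hmono : Monotone fun k : ℕ => z + k * g := fun k l hkl => by simp only; gcongr
  have hterm (k : ℕ) : edist (φ (y + k * g)) (φ (z + k * g)) ≤
      eVariationOn φ (Icc (z + k * g) (z + ↑(k + 1) * g)) := by
    refine eVariationOn.edist_le φ ⟨?_, ?_⟩ ⟨le_rfl, hmono k.le_succ⟩
    · linarith [hy.1]
    · push_cast
      linarith [hy.2]
  refine (dist_birkhoffSum_birkhoffSum_le _ _ _ _ _).trans (ENNReal.ofReal_le_coe.mp ?_)
  rw [ENNReal.ofReal_sum_of_nonneg fun _ _ => dist_nonneg]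
  simp only [← edist_dist, add_right_iterate, nsmul_eq_mul]
  calc ∑ k ∈ Finset.range N, edist (φ (y + k * g)) (φ (z + k * g))
      ≤ ∑ k ∈ Finset.range N, eVariationOn φ (Icc (z + k * g) (z + ↑(k + 1) * g)) :=
        Finset.sum_le_sum fun k _ => hterm k
    _ = eVariationOn φ (Icc z (z + N * g)) := by
        simpa only [Nat.cast_zero, zero_mul, add_zero] using eVariationOn.sum' φ hmono
    _ ≤ K := hK

variable {E : Type*} [NormedAddCommGroup E] [NormedSpace ℝ E] {φ : ℝ → E}

lemma periodic_birkhoffAverage_add_right {P : ℝ} (hφ : Function.Periodic φ P) (c : ℝ) (M : ℕ) :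
    Function.Periodic (birkhoffAverage ℝ (· + c) φ M) P := fun x => by
  simp only [birkhoffAverage, birkhoffSum, add_right_iterate, add_right_comm x P, hφ _]

lemma periodic_birkhoffAverage_self {P : ℕ} (hφ : Function.Periodic φ P) (c : ℤ) :
    Function.Periodic (birkhoffAverage ℝ (· + (c : ℝ)) φ P) c := fun x => by
  rw [← sub_eq_zero, birkhoffAverage_apply_sub_birkhoffAverage (· + (c : ℝ)), add_right_iterate,
    nsmul_eq_mul, mul_comm, hφ.int_mul c, sub_self, smul_zero]

lemma periodic_birkhoffAverage_gcd {P : ℕ} (hφ : Function.Periodic φ P) (c : ℤ) :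
    Function.Periodic (birkhoffAverage ℝ (· + (c : ℝ)) φ P) (c.gcd P) := by
  have bezout : ((c.gcd P : ℕ) : ℝ) = c.gcdA P * c + c.gcdB P * P := by
    have := congrArg (Int.cast (R := ℝ)) (Int.gcd_eq_gcd_ab c P)
    push_cast at this
    rw [this]
    ring
  rw [bezout]
  exact ((periodic_birkhoffAverage_self hφ c).int_mul _).add_period
    ((periodic_birkhoffAverage_add_right hφ _ _).int_mul _)

lemma birkhoffAverage_mul_of_iterate_comp_eq {α : Type*} {T : α → α} {φ : α → E} {P r : ℕ}
    (h : φ ∘ T^[P] = φ) (hr : r ≠ 0) :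
    birkhoffAverage ℝ T φ (P * r) = birkhoffAverage ℝ T φ P := by
  ext x
  rw [birkhoffAverage, birkhoffSum_mul_of_iterate_comp_eq h, birkhoffAverage, Pi.smul_apply,
    ← Nat.cast_smul_eq_nsmul ℝ r, smul_smul, Nat.cast_mul, mul_inv,
    inv_mul_cancel_right₀ (Nat.cast_ne_zero.mpr hr)]

lemma birkhoffAverage_birkhoffSum_add_right (φ : ℝ → E) (c g : ℝ) (M N : ℕ) :
    birkhoffAverage ℝ (· + c) (birkhoffSum (· + g) φ N) M =
      birkhoffSum (· + g) (birkhoffAverage ℝ (· + c) φ M) N := by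
  ext x
  simp only [birkhoffAverage, birkhoffSum, add_right_iterate, ← Finset.smul_sum]
  rw [Finset.sum_comm]
  simp only [add_right_comm x]

lemma dist_birkhoffAverage_le_of_forall {α : Type*} {T : α → α} {φ : α → E} {K : ℝ≥0} {x y : α}
    (h : ∀ k, dist (φ (T^[k] x)) (φ (T^[k] y)) ≤ K) (M : ℕ) :
    dist (birkhoffAverage ℝ T φ M x) (birkhoffAverage ℝ T φ M y) ≤ K := by
  refine (dist_birkhoffAverage_birkhoffAverage_le ℝ T φ M x y).trans
    (div_le_of_le_mul₀ M.cast_nonneg K.2 ?_)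
  simpa [mul_comm] using Finset.sum_le_card_nsmul (Finset.range M) _ _ fun k _ => h k

/-- Averaging over the translations by `c` makes `φ` periodic under `g = gcd(c, P)`; averaging the
result over the translations by `g` then costs only one variation of `φ` for `P / g` copies. -/
lemma dist_birkhoffAverage_add_right_le {P : ℕ} (hP : P ≠ 0) {K : ℝ≥0}
    (hφ : Function.Periodic φ P) (hK : ∀ x, eVariationOn φ (Icc x (x + P)) ≤ K) (c : ℤ) (y z : ℝ) :
    (P / c.gcd P : ℕ) * dist (birkhoffAverage ℝ (· + (c : ℝ)) φ P y)
      (birkhoffAverage ℝ (· + (c : ℝ)) φ P z) ≤ K := by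
  set A := birkhoffAverage ℝ (· + (c : ℝ)) φ P
  set g := c.gcd P
  set N := P / g
  have hg0 : (0 : ℝ) < g := by
    exact_mod_cast Int.gcd_pos_of_ne_zero_right c (Int.natCast_ne_zero.mpr hP)
  have hNg : (N : ℝ) * g = P := by
    exact_mod_cast Nat.div_mul_cancel (Int.natCast_dvd_natCast.mp (Int.gcd_dvd_right c P))
  have hAg : Function.Periodic A g := periodic_birkhoffAverage_gcd hφ c
  have hsum (x : ℝ) : birkhoffAverage ℝ (· + (c : ℝ)) (birkhoffSum (· + (g : ℝ)) φ N) P x =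
      (N : ℝ) • A x := by
    have hcomp : A ∘ (· + (g : ℝ)) = A := funext hAg
    rw [birkhoffAverage_birkhoffSum_add_right, birkhoffSum_of_comp_eq hcomp, Pi.smul_apply,
      Nat.cast_smul_eq_nsmul]
  obtain ⟨y', hy', hyy'⟩ := hAg.exists_mem_Ico hg0 y z
  have hdist : dist ((N : ℝ) • A y') ((N : ℝ) • A z) ≤ K := by
    rw [← hsum, ← hsum]
    refine dist_birkhoffAverage_le_of_forall (fun k => ?_) P
    rw [add_right_iterate]
    refine dist_birkhoffSum_add_right_le (by simpa only [hNg] using hK _) ⟨?_, ?_⟩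
    · linarith [hy'.1]
    · linarith [hy'.2]
  rw [hyy']
  rwa [dist_smul₀, Real.norm_natCast] at hdist

end Averages

section AdicSums

/-- Sequences of integers whose `n`-th entry is determined modulo `d ^ (m + 1)` by the `m`-th one
for `m ≤ n`. They represent the `d`-adic integers, the `n`-th entry being an approximation
modulo `d ^ (n + 1)`. -/
def adicSequences (d : ℕ) : AddSubgroup (ℕ → ℤ) where
  carrier := {a | ∀ ⦃m n⦄, m ≤ n → a n ≡ a m [ZMOD ↑(d ^ (m + 1))]}
  add_mem' ha hb _ _ hmn := (ha hmn).add (hb hmn)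
  zero_mem' _ _ _ := rfl
  neg_mem' ha _ _ hmn := (ha hmn).neg

lemma two_pow_sub_le_of_pow_dvd_mul {d c N s l : ℕ} (hN : N ≠ 0) (hc : ¬ d ^ (s + 1) ∣ c)
    (hdvd : d ^ l ∣ c * N) : 2 ^ (l - s) ≤ N := by
  have hc0 : c ≠ 0 := by
    rintro rfl
    exact hc (dvd_zero _)
  rcases eq_or_ne d 0 with rfl | hd
  · rcases l.eq_zero_or_pos with rfl | hl
    · simpa using Nat.one_le_iff_ne_zero.mpr hN
    · rw [zero_pow hl.ne', zero_dvd_iff] at hdvd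
      exact absurd hdvd (mul_ne_zero hc0 hN)
  obtain ⟨p, hp, hlt⟩ : ∃ p, p.Prime ∧ c.factorization p < (s + 1) * d.factorization p := by
    rw [← Nat.factorization_prime_le_iff_dvd (pow_ne_zero _ hd) hc0] at hc
    simpa [Nat.factorization_pow] using hc
  have hle : l * d.factorization p ≤ c.factorization p + N.factorization p := by
    have hfac := (Nat.factorization_le_iff_dvd (pow_ne_zero _ hd) (mul_ne_zero hc0 hN)).mpr hdvd p
    simpa [Nat.factorization_pow, Nat.factorization_mul hc0 hN] using hfac
  have hexp : l - s ≤ N.factorization p := by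
    have hD : 0 < d.factorization p := Nat.pos_of_mul_pos_left (hlt.trans_le' (Nat.zero_le _))
    have hlD : l * d.factorization p < (N.factorization p + (s + 1)) * d.factorization p := by
      linarith [Nat.le_mul_of_pos_right (N.factorization p) hD]
    rw [tsub_le_iff_right]
    exact Nat.lt_succ_iff.mp (lt_of_mul_lt_mul_right' hlD)
  calc 2 ^ (l - s) ≤ p ^ N.factorization p :=
        (Nat.pow_le_pow_left hp.two_le _).trans (Nat.pow_le_pow_right hp.pos hexp)
    _ ≤ N := Nat.ordProj_le p hN

lemma two_pow_sub_le_div_gcd {d : ℕ} (hd : d ≠ 0) {e : ℕ → ℤ} (he : e ∈ adicSequences d) {s : ℕ}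
    (hs : ¬ e s ≡ 0 [ZMOD ↑(d ^ (s + 1))]) (n : ℕ) :
    2 ^ (n + 1 - s) ≤ d ^ (n + 1) / (e n).gcd ↑(d ^ (n + 1)) := by
  have hg : (e n).gcd ↑(d ^ (n + 1)) ∣ d ^ (n + 1) := Int.gcd_dvd_natAbs_right _ _
  have hN : d ^ (n + 1) / (e n).gcd ↑(d ^ (n + 1)) ≠ 0 :=
    (Nat.div_pos (Nat.le_of_dvd (by positivity) hg) (Nat.pos_of_dvd_of_pos hg (by positivity))).ne'
  rcases lt_or_ge n s with hns | hsn
  · rw [Nat.sub_eq_zero_of_le hns, pow_zero]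
    exact Nat.one_le_iff_ne_zero.mpr hN
  · have hndvd : ¬ d ^ (s + 1) ∣ (e n).natAbs := fun h =>
      hs ((he hsn).symm.trans (Int.modEq_zero_iff_dvd.mpr (Int.natCast_dvd.mpr h)))
    refine two_pow_sub_le_of_pow_dvd_mul hN hndvd ?_
    rw [← Nat.mul_div_assoc _ hg, mul_comm, Nat.mul_div_assoc _ (Int.gcd_dvd_natAbs_left _ _)]
    exact dvd_mul_right _ _

variable {E : Type*} [NormedAddCommGroup E]

/-- The series `∑ (V n (x + a n) - V n (a n))`. When `V n` has period `d ^ (n + 1)`, it depends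
only on the `d`-adic integer represented by `a`. -/
noncomputable def adicSum (V : ℕ → ℝ → E) (a : ℕ → ℤ) (x : ℝ) : E :=
  ∑' n, (V n (x + a n) - V n (a n))

lemma adicSum_zero (V : ℕ → ℝ → E) (x : ℝ) : adicSum V 0 x = ∑' n, (V n x - V n 0) := by
  simp only [adicSum, Pi.zero_apply, Int.cast_zero, add_zero]

/-- A sequence of functions in which `V n` is `d ^ (n + 1)`-periodic and Lipschitz with a summable
sequence of constants, so that the series `adicSum V a` converge. -/
structure IsAdicFamily (d : ℕ) (V : ℕ → ℝ → E) (ℓ : ℕ → ℝ≥0) : Prop where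
  periodic (n : ℕ) : Function.Periodic (V n) ↑(d ^ (n + 1))
  lipschitz (n : ℕ) : LipschitzWith (ℓ n) (V n)
  summable : Summable ℓ

namespace IsAdicFamily

variable {d : ℕ} {V : ℕ → ℝ → E} {ℓ : ℕ → ℝ≥0}

lemma norm_sub_le (hV : IsAdicFamily d V ℓ) (n : ℕ) (x t : ℝ) :
    ‖V n (x + t) - V n t‖ ≤ ℓ n * |x| := by
  simpa only [dist_eq_norm, add_sub_cancel_right, Real.norm_eq_abs] using
    (hV.lipschitz n).dist_le_mul (x + t) t

lemma summable_bound (hV : IsAdicFamily d V ℓ) (x : ℝ) : Summable fun n => (ℓ n : ℝ) * |x| :=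
  (NNReal.summable_coe.mpr hV.summable).mul_right _

lemma summable_sub [CompleteSpace E] (hV : IsAdicFamily d V ℓ) (t : ℕ → ℝ) (x : ℝ) :
    Summable fun n => V n (x + t n) - V n (t n) :=
  .of_norm_bounded (hV.summable_bound x) fun n => hV.norm_sub_le n x (t n)

lemma adicSum_add_const [CompleteSpace E] (hV : IsAdicFamily d V ℓ) (a : ℕ → ℤ) (m : ℤ) (x : ℝ) :
    adicSum V (a + Function.const ℕ m) x = adicSum V a (x + m) - adicSum V a m := by
  unfold adicSum
  rw [← (hV.summable_sub _ _).tsum_sub (hV.summable_sub _ _)]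
  refine tsum_congr fun n => ?_
  simp only [Pi.add_apply, Function.const_apply, Int.cast_add]
  rw [sub_sub_sub_cancel_right, ← add_assoc, add_right_comm x, add_comm (a n : ℝ)]

lemma tendsto_adicSum [CompleteSpace E] (hV : IsAdicFamily d V ℓ) {c : ℕ → ℤ}
    (hc : c ∈ adicSequences d) (a : ℕ → ℤ) (x : ℝ) :
    Tendsto (fun L => adicSum V (a + Function.const ℕ (c L)) x) atTop
      (𝓝 (adicSum V (a + c) x)) := by
  refine tendsto_tsum_of_dominated_convergence (hV.summable_bound x) (fun n => ?_)
    (.of_forall fun L n => hV.norm_sub_le n x _)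
  refine tendsto_const_nhds.congr' ?_
  filter_upwards [eventually_ge_atTop n] with L hL
  have hmod : (a + c) n ≡ a n + c L [ZMOD ↑(d ^ (n + 1))] := (hc hL).symm.add_left _
  have hzero := add_intCast_eq_of_modEq (hV.periodic n) hmod 0
  simp only [zero_add] at hzero
  rw [add_intCast_eq_of_modEq (hV.periodic n) hmod, hzero]
  rfl

lemma adicSum_add_congr [CompleteSpace E] (hV : IsAdicFamily d V ℓ) {a b c : ℕ → ℤ}
    (hab : adicSum V a = adicSum V b) (hc : c ∈ adicSequences d) :
    adicSum V (a + c) = adicSum V (b + c) := by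
  ext x
  refine tendsto_nhds_unique (hV.tendsto_adicSum hc a x)
    ((hV.tendsto_adicSum hc b x).congr fun L => ?_)
  rw [hV.adicSum_add_const, hV.adicSum_add_const, hab]

lemma adicSum_nsmul_sub [CompleteSpace E] (hV : IsAdicFamily d V ℓ) {a b : ℕ → ℤ}
    (ha : a ∈ adicSequences d) (hb : b ∈ adicSequences d) (hab : adicSum V a = adicSum V b)
    (t : ℕ) : adicSum V (t • (b - a)) = adicSum V 0 := by
  induction t with
  | zero => rw [zero_nsmul]
  | succ t ih =>
    have hc : t • (b - a) - a ∈ adicSequences d := sub_mem (nsmul_mem (sub_mem hb ha) t) ha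
    have key := hV.adicSum_add_congr hab hc
    rw [add_sub_cancel, ih] at key
    rw [key, succ_nsmul]
    congr 1
    abel

lemma adicSum_eq_of_periodic [CompleteSpace E] (hV : IsAdicFamily d V ℓ)
    (hper : Function.Periodic (adicSum V 0) 1) {a : ℕ → ℤ} (ha : a ∈ adicSequences d) :
    adicSum V a = adicSum V 0 := by
  ext x
  have hconst (m : ℤ) : adicSum V (0 + Function.const ℕ m) x = adicSum V 0 x := by
    have hzero : adicSum V 0 0 = 0 := by simp only [adicSum_zero, sub_self, tsum_zero]
    have hm : Function.Periodic (adicSum V 0) m := by simpa using hper.int_mul m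
    rw [hV.adicSum_add_const, hm, hm.eq, hzero, sub_zero]
  have hlim := hV.tendsto_adicSum ha 0 x
  simp only [hconst] at hlim
  simpa only [zero_add] using tendsto_nhds_unique hlim tendsto_const_nhds

lemma tendstoUniformly_adicSum_add_pow [CompleteSpace E] (hV : IsAdicFamily d V ℓ) {u : ℕ → ℝ}
    (hu : Summable u) (hVu : ∀ n x y, dist (V n x) (V n y) ≤ u n) :
    TendstoUniformly (fun N x => adicSum V 0 (x + ↑(d ^ N))) (adicSum V 0) atTop := by
  rw [Metric.tendstoUniformly_iff]
  intro ε hε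
  have hbound (n : ℕ) (x : ℝ) : ‖V n x - V n 0‖ ≤ u n := by
    rw [← dist_eq_norm]
    exact hVu n x 0
  have htail := Metric.tendstoUniformly_iff.mp (tendstoUniformly_tsum_nat hu hbound) _ (half_pos hε)
  filter_upwards [htail] with N hN x
  have hper : ∑ n ∈ Finset.range N, (V n (x + ↑(d ^ N)) - V n 0) =
      ∑ n ∈ Finset.range N, (V n x - V n 0) := by
    refine Finset.sum_congr rfl fun n hn => ?_
    have hdvd : d ^ N = d ^ (N - (n + 1)) * d ^ (n + 1) := by
      rw [← pow_add, Nat.sub_add_cancel (Finset.mem_range.mp hn)]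
    rw [hdvd, Nat.cast_mul, (hV.periodic n).nat_mul]
  have hxN := hN (x + ↑(d ^ N))
  rw [hper] at hxN
  simp only [adicSum_zero]
  exact (dist_triangle_right _ _ _).trans_lt ((add_lt_add (hN x) hxN).trans_eq (add_halves ε))

variable [NormedSpace ℝ E]

lemma birkhoffAverage_add_right (hV : IsAdicFamily d V ℓ) (e : ℕ → ℤ) (M : ℕ → ℕ) :
    IsAdicFamily d (fun n => birkhoffAverage ℝ (· + (e n : ℝ)) (V n) (M n)) ℓ where
  periodic n := periodic_birkhoffAverage_add_right (hV.periodic n) _ _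
  lipschitz n := .of_dist_le_mul fun x y => by
    refine dist_birkhoffAverage_le_of_forall (K := ℓ n * nndist x y) (fun k => ?_) (M n)
    simpa only [add_right_iterate, dist_add_right, NNReal.coe_mul, coe_nndist] using
      (hV.lipschitz n).dist_le_mul (x + k • (e n : ℝ)) (y + k • (e n : ℝ))
  summable := hV.summable

lemma adicSum_birkhoffAverage_of_nsmul [CompleteSpace E] (hV : IsAdicFamily d V ℓ) {e : ℕ → ℤ}
    (he : ∀ t : ℕ, adicSum V (t • e) = adicSum V 0) {M : ℕ} (hM : M ≠ 0) :
    adicSum (fun n => birkhoffAverage ℝ (· + (e n : ℝ)) (V n) M) 0 = adicSum V 0 := by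
  ext x
  have hterm (n : ℕ) : birkhoffAverage ℝ (· + (e n : ℝ)) (V n) M x -
      birkhoffAverage ℝ (· + (e n : ℝ)) (V n) M 0 =
      (M : ℝ)⁻¹ • ∑ t ∈ Finset.range M, (V n (x + (t • e) n) - V n ((t • e) n)) := by
    simp [birkhoffAverage, birkhoffSum, add_right_iterate, smul_sub]
  simp only [adicSum_zero, hterm]
  rw [tsum_const_smul'', Summable.tsum_finsetSum fun t _ => hV.summable_sub _ _]
  change (M : ℝ)⁻¹ • ∑ t ∈ Finset.range M, adicSum V (t • e) x = _
  simp only [he, Finset.sum_const, Finset.card_range, ← Nat.cast_smul_eq_nsmul ℝ,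
    inv_smul_smul₀ (Nat.cast_ne_zero.mpr hM : (M : ℝ) ≠ 0), adicSum_zero]

lemma adicSum_birkhoffAverage_pow_of_nsmul [CompleteSpace E] (hd : d ≠ 0)
    (hV : IsAdicFamily d V ℓ) {e : ℕ → ℤ} (he : ∀ t : ℕ, adicSum V (t • e) = adicSum V 0) :
    adicSum (fun n => birkhoffAverage ℝ (· + (e n : ℝ)) (V n) (d ^ (n + 1))) 0 = adicSum V 0 := by
  ext x
  have hstable {n L : ℕ} (hL : n + 1 ≤ L) : birkhoffAverage ℝ (· + (e n : ℝ)) (V n) (d ^ L) =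
      birkhoffAverage ℝ (· + (e n : ℝ)) (V n) (d ^ (n + 1)) := by
    obtain ⟨k, rfl⟩ := Nat.exists_eq_add_of_le hL
    rw [pow_add]
    refine birkhoffAverage_mul_of_iterate_comp_eq (funext fun y => ?_) (pow_ne_zero k hd)
    simpa only [Function.comp_apply, add_right_iterate, nsmul_eq_mul, mul_comm] using
      (hV.periodic n).int_mul (e n) y
  have hlim : Tendsto
      (fun L => adicSum (fun n => birkhoffAverage ℝ (· + (e n : ℝ)) (V n) (d ^ L)) 0 x) atTop
      (𝓝 (adicSum (fun n => birkhoffAverage ℝ (· + (e n : ℝ)) (V n) (d ^ (n + 1))) 0 x)) := by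
    refine tendsto_tsum_of_dominated_convergence (hV.summable_bound x) (fun n => ?_)
      (.of_forall fun L n => (hV.birkhoffAverage_add_right e fun _ => d ^ L).norm_sub_le n x _)
    refine tendsto_const_nhds.congr' ?_
    filter_upwards [eventually_ge_atTop (n + 1)] with L hL
    rw [hstable hL]
  simp only [hV.adicSum_birkhoffAverage_of_nsmul he (pow_ne_zero _ hd)] at hlim
  exact (tendsto_nhds_unique tendsto_const_nhds hlim).symm

/-- With `e = b - a`, all sums along multiples of `e` agree, so each `V n` may be replaced by its
average over translations by `e n`; the oscillation of these averages decays geometrically. -/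
lemma tendstoUniformly_adicSum_add_pow_of_eq [CompleteSpace E] (hd : d ≠ 0)
    (hV : IsAdicFamily d V ℓ) {K : ℝ≥0}
    (hK : ∀ n x, eVariationOn (V n) (Icc x (x + ↑(d ^ (n + 1)))) ≤ K) {a b : ℕ → ℤ}
    (ha : a ∈ adicSequences d) (hb : b ∈ adicSequences d) (hab : adicSum V a = adicSum V b) {s : ℕ}
    (hs : ¬ a s ≡ b s [ZMOD ↑(d ^ (s + 1))]) :
    TendstoUniformly (fun N x => adicSum V 0 (x + ↑(d ^ N))) (adicSum V 0) atTop := by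
  have hes : ¬ (b - a) s ≡ 0 [ZMOD ↑(d ^ (s + 1))] := fun h =>
    hs (Int.modEq_iff_dvd.mpr (Int.modEq_zero_iff_dvd.mp h))
  have hsummable : Summable fun n => (K : ℝ) * (1 / 2) ^ (n + 1 - s) := by
    refine (Summable.mul_left _ ((summable_nat_add_iff s).mp ?_))
    simpa only [add_right_comm _ s, Nat.add_sub_cancel] using
      (summable_nat_add_iff 1).mpr summable_geometric_two
  rw [← hV.adicSum_birkhoffAverage_pow_of_nsmul hd (hV.adicSum_nsmul_sub ha hb hab)]
  refine (hV.birkhoffAverage_add_right (b - a) _).tendstoUniformly_adicSum_add_pow hsummable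
    fun n x y => ?_
  have hosc := dist_birkhoffAverage_add_right_le (pow_ne_zero (n + 1) hd) (hV.periodic n) (hK n)
    ((b - a) n) x y
  have hpow : (2 : ℝ) ^ (n + 1 - s) ≤ ↑(d ^ (n + 1) / ((b - a) n).gcd ↑(d ^ (n + 1))) := by
    exact_mod_cast two_pow_sub_le_div_gcd hd (sub_mem hb ha) hes n
  rw [one_div, inv_pow, ← div_eq_mul_inv, le_div_iff₀' (by positivity)]
  exact (mul_le_mul_of_nonneg_right hpow dist_nonneg).trans hosc

end IsAdicFamily

end AdicSums

section InverseBranches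

variable {d : ℕ} {T τ : ℝ → ℝ}

lemma map_add_natCast_mul {F : ℝ → ℝ} {a b : ℝ} (hF : ∀ x, F (x + a) = F x + b) (x : ℝ) (m : ℕ) :
    F (x + m * a) = F x + m * b := by
  rw [← nsmul_eq_mul, ← nsmul_eq_mul]
  exact AddConstMapClass.map_add_nsmul (⟨F, hF⟩ : AddConstMap ℝ ℝ a b) x m

lemma iterate_add_mul_pow (hτ : ∀ x, τ (x + d) = τ x + 1) (n m : ℕ) (x : ℝ) :
    τ^[n] (x + ↑(m * d ^ n)) = τ^[n] x + m := by
  induction n generalizing x with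
  | zero => simp
  | succ n ih =>
    have hstep : τ (x + ↑(m * d ^ (n + 1))) = τ x + ↑(m * d ^ n) := by
      rw [pow_succ, ← mul_assoc, Nat.cast_mul, map_add_natCast_mul hτ, mul_one]
    rw [Function.iterate_succ_apply, hstep, ih, Function.iterate_succ_apply]

lemma iterate_add_pow (hτ : ∀ x, τ (x + d) = τ x + 1) (n : ℕ) (x : ℝ) :
    τ^[n] (x + ↑(d ^ n)) = τ^[n] x + 1 := by
  simpa using iterate_add_mul_pow hτ n 1 x

/-- The difference `h (x + 1) - h x` equals `h (y + d ^ n) - h y` at `y = T^[n] x`. -/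
lemma periodic_of_tendstoUniformly {E : Type*} [NormedAddCommGroup E] {h φ : ℝ → E}
    (hT : ∀ x, T (x + 1) = T x + d) (hφ : Function.Periodic φ 1) (hh : ∀ x, h (T x) = φ x + h x)
    (hlim : TendstoUniformly (fun n x => h (x + ↑(d ^ n))) h atTop) : Function.Periodic h 1 := by
  intro x
  have hstep (n : ℕ) (y : ℝ) : h (T y + ↑(d ^ (n + 1))) - h (T y) = h (y + ↑(d ^ n)) - h y := by
    have hTy : T y + ↑(d ^ (n + 1)) = T (y + ↑(d ^ n)) := by
      simpa [pow_succ] using (map_add_natCast_mul hT y (d ^ n)).symm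
    have hφy : φ (y + ↑(d ^ n)) = φ y := by simpa using hφ.nat_mul (d ^ n) y
    rw [hTy, hh, hh, hφy, add_sub_add_left_eq_sub]
  have horbit (n : ℕ) : h (T^[n] x + ↑(d ^ n)) - h (T^[n] x) = h (x + 1) - h x := by
    induction n with
    | zero => simp
    | succ n ih => rw [Function.iterate_succ_apply', hstep, ih]
  have hsmall : ∀ ε > 0, dist (h x) (h (x + 1)) ≤ ε := fun ε hε => by
    obtain ⟨n, hn⟩ := (Metric.tendstoUniformly_iff.mp hlim ε hε).exists
    rw [dist_eq_norm', ← horbit n, ← dist_eq_norm']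
    exact (hn _).le
  exact (dist_le_zero.mp (le_of_forall_gt_imp_ge_of_dense hsmall)).symm

variable {E : Type*}

/-- The observable `f` read along the iterates of the inverse branch `τ`. -/
def branchFamily (τ : ℝ → ℝ) (f : ℝ → E) (n : ℕ) : ℝ → E :=
  f ∘ τ^[n + 1]

variable [NormedAddCommGroup E] {f : ℝ → E} {K q : ℝ≥0}

lemma isAdicFamily_branchFamily (hτ : ∀ x, τ (x + d) = τ x + 1) (hq : q < 1)
    (hτq : LipschitzWith q τ) (hf : Function.Periodic f 1) (hfK : LipschitzWith K f) :
    IsAdicFamily d (branchFamily τ f) fun n => K * q ^ (n + 1) where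
  periodic n x := by
    rw [branchFamily, Function.comp_apply, iterate_add_pow hτ, hf, Function.comp_apply]
  lipschitz n := hfK.comp (hτq.iterate (n + 1))
  summable := ((NNReal.summable_nat_add_iff 1).mpr (NNReal.summable_geometric hq)).mul_left K

lemma eVariationOn_branchFamily_le (hτ : ∀ x, τ (x + d) = τ x + 1) (hmono : Monotone τ)
    (hfK : LipschitzWith K f) (n : ℕ) (x : ℝ) :
    eVariationOn (branchFamily τ f n) (Icc x (x + ↑(d ^ (n + 1)))) ≤ K := by
  have hle : x ≤ x + ↑(d ^ (n + 1)) := le_add_of_nonneg_right (Nat.cast_nonneg _)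
  calc eVariationOn (f ∘ τ^[n + 1]) (Icc x (x + ↑(d ^ (n + 1))))
      ≤ K * eVariationOn τ^[n + 1] (Icc x (x + ↑(d ^ (n + 1)))) :=
        (hfK.lipschitzOnWith (s := univ)).comp_eVariationOn_le (mapsTo_univ _ _)
    _ = K * ENNReal.ofReal (τ^[n + 1] (x + ↑(d ^ (n + 1))) - τ^[n + 1] x) := by
        rw [← ((hmono.iterate (n + 1)).monotoneOn _).eVariationOn_eq (left_mem_Icc.mpr hle)
          (right_mem_Icc.mpr hle), inter_self]
    _ = K := by rw [iterate_add_pow hτ, add_sub_cancel_left, ENNReal.ofReal_one, mul_one]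

lemma adicSum_branchFamily_eq_add [CompleteSpace E] {ℓ : ℕ → ℝ≥0}
    (hV : IsAdicFamily d (branchFamily τ f) ℓ) (hτ0 : τ 0 = 0) (x : ℝ) :
    adicSum (branchFamily τ f) 0 x = f (τ x) - f 0 + adicSum (branchFamily τ f) 0 (τ x) := by
  have hsum : Summable fun n => branchFamily τ f n x - branchFamily τ f n 0 := by
    simpa using hV.summable_sub 0 x
  simp only [adicSum_zero]
  rw [hsum.tsum_eq_zero_add]
  simp [branchFamily, hτ0]

lemma adicSum_branchFamily_map [CompleteSpace E] {ℓ : ℕ → ℝ≥0}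
    (hV : IsAdicFamily d (branchFamily τ f) ℓ) (hτ0 : τ 0 = 0) (hinv : Function.LeftInverse τ T)
    (x : ℝ) :
    adicSum (branchFamily τ f) 0 (T x) = f x - f 0 + adicSum (branchFamily τ f) 0 x := by
  simpa only [hinv x] using adicSum_branchFamily_eq_add hV hτ0 (T x)

end InverseBranches

section Digits

/-- The truncations modulo `d ^ (n + 1)` of the `d`-adic integer with digits `i`. -/
def digitSequence (d : ℕ) (i : ℕ → ℕ) (n : ℕ) : ℤ :=
  ∑ m ∈ Finset.range (n + 1), i m * d ^ m

variable {d : ℕ}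

lemma digitSequence_succ (d : ℕ) (i : ℕ → ℕ) (n : ℕ) :
    digitSequence d i (n + 1) = digitSequence d i n + ↑(i (n + 1) * d ^ (n + 1)) := by
  simp [digitSequence, Finset.sum_range_succ _ (n + 1)]

lemma digitSequence_mem_adicSequences (i : ℕ → ℕ) : digitSequence d i ∈ adicSequences d := by
  intro m n hmn
  induction n, hmn using Nat.le_induction with
  | base => rfl
  | succ n hmn ih =>
    refine Int.ModEq.trans ?_ ih
    rw [digitSequence_succ, Int.modEq_iff_dvd, sub_add_cancel_left, dvd_neg,
      Int.natCast_dvd_natCast]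
    exact Dvd.dvd.mul_left (pow_dvd_pow d (by omega)) _

lemma exists_not_digitSequence_modEq (i j : ℕ → Fin d) (hij : i ≠ j) :
    ∃ s, ¬ digitSequence d (fun m => i m) s ≡ digitSequence d (fun m => j m) s
      [ZMOD ↑(d ^ (s + 1))] := by
  by_contra! hmod
  refine hij (funext fun n => ?_)
  induction n using Nat.strong_induction_on with
  | _ n ih =>
    have hd : (d : ℤ) ^ n ≠ 0 := pow_ne_zero n (Int.natCast_ne_zero.mpr (i n).pos.ne')
    have hlow : ∑ m ∈ Finset.range n, ((i m : ℕ) : ℤ) * d ^ m =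
        ∑ m ∈ Finset.range n, ((j m : ℕ) : ℤ) * d ^ m :=
      Finset.sum_congr rfl fun m hm => by rw [ih m (Finset.mem_range.mp hm)]
    have hn := hmod n
    rw [digitSequence, Finset.sum_range_succ, digitSequence, Finset.sum_range_succ, hlow,
      Nat.cast_pow, pow_succ'] at hn
    have hdigit := (hn.add_left_cancel' _).mul_right_cancel' hd
    exact Fin.ext ((Int.natCast_modEq_iff.mp hdigit).eq_of_lt_of_lt (i n).is_lt (j n).is_lt)

lemma tauIt_succ_eq_iterate {τ : ℝ → ℝ} (hτ : ∀ x, τ (x + d) = τ x + 1) (i : ℕ → ℕ) (n : ℕ)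
    (x : ℝ) : tauIt τ i (n + 1) x = τ^[n + 1] (x + digitSequence d i n) := by
  induction n with
  | zero => simp [tauIt, digitSequence]
  | succ n ih =>
    change τ (tauIt τ i (n + 1) x + i (n + 1)) = _
    rw [ih, ← iterate_add_mul_pow hτ, ← Function.iterate_succ_apply' τ, digitSequence_succ,
      Int.cast_add, Int.cast_natCast, add_assoc]

lemma hFunR_eq_adicSum {τ : ℝ → ℝ} (hτ : ∀ x, τ (x + d) = τ x + 1) (f : ℝ → ℝ) (i : ℕ → ℕ) :
    hFunR τ f i = adicSum (branchFamily τ f) (digitSequence d i) := by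
  ext x
  simp [hFunR, adicSum, branchFamily, tauIt_succ_eq_iterate hτ]

end Digits

section Coincidences

variable {d : ℕ} {T τ f : ℝ → ℝ} {ℓ : ℕ → ℝ≥0}

lemma periodic_adicSum_branchFamily_of_hFunR_eq (hT : ∀ x, T (x + 1) = T x + d)
    (hinv : Function.LeftInverse τ T) (hτ : ∀ x, τ (x + d) = τ x + 1) (hτ0 : τ 0 = 0)
    (hmono : Monotone τ) (hf : Function.Periodic f 1) {K : ℝ≥0} (hfK : LipschitzWith K f)
    (hV : IsAdicFamily d (branchFamily τ f) ℓ) {i j : ℕ → Fin d} (hij : i ≠ j)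
    (heq : hFunR τ f (fun m => i m) = hFunR τ f (fun m => j m)) :
    Function.Periodic (adicSum (branchFamily τ f) 0) 1 := by
  obtain ⟨s, hs⟩ := exists_not_digitSequence_modEq i j hij
  rw [hFunR_eq_adicSum hτ, hFunR_eq_adicSum hτ] at heq
  exact periodic_of_tendstoUniformly hT (fun x => by rw [hf]) (adicSum_branchFamily_map hV hτ0 hinv)
    (hV.tendstoUniformly_adicSum_add_pow_of_eq (i 0).pos.ne'
      (eVariationOn_branchFamily_le hτ hmono hfK) (digitSequence_mem_adicSequences _)
      (digitSequence_mem_adicSequences _) heq hs)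

lemma hFunR_eq_of_periodic (hτ : ∀ x, τ (x + d) = τ x + 1)
    (hV : IsAdicFamily d (branchFamily τ f) ℓ)
    (hper : Function.Periodic (adicSum (branchFamily τ f) 0) 1) (i : ℕ → ℕ) :
    hFunR τ f i = adicSum (branchFamily τ f) 0 :=
  (hFunR_eq_adicSum hτ f i).trans
    (hV.adicSum_eq_of_periodic hper (digitSequence_mem_adicSequences i))

end Coincidences

section Analyticity

lemma exists_analyticAt_complex_extension {f : ℝ → ℝ} {p : ℝ} (hf : AnalyticAt ℝ f p) :
    ∃ F : ℂ → ℂ, AnalyticAt ℂ F p ∧ ∀ᶠ x : ℝ in 𝓝 p, F x = f x := by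
  obtain ⟨s, hs⟩ := hf
  obtain ⟨r, hr0, hr⟩ := ENNReal.lt_iff_exists_nnreal_btwn.mp hs.radius_pos
  obtain ⟨C, -, hC⟩ := s.norm_mul_pow_le_of_lt_radius hr
  let S := FormalMultilinearSeries.ofScalars ℂ fun n => (s.coeff n : ℂ)
  have hS : 0 < S.radius := by
    refine (hr0.trans_le (S.le_radius_of_bound C fun n => ?_))
    simpa [S, FormalMultilinearSeries.ofScalars_norm,
      FormalMultilinearSeries.norm_apply_eq_norm_coef] using hC n
  refine ⟨fun z => S.sum (z - p), ?_, ?_⟩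
  · have hsum : AnalyticAt ℂ S.sum (p - p) := by
      simpa using (S.hasFPowerSeriesOnBall hS).analyticAt
    exact hsum.comp (f := fun z : ℂ => z - p) (analyticAt_id.sub analyticAt_const)
  · filter_upwards [hasFPowerSeriesAt_iff'.mp hs] with x hx
    rw [← (Complex.hasSum_ofReal.mpr hx).tsum_eq]
    simp [S, FormalMultilinearSeries.sum, mul_comm]

lemma exists_eventually_dist_iterate_le {𝕜 : Type*} [NontriviallyNormedField 𝕜] {G : 𝕜 → 𝕜}
    {G' p : 𝕜} (hG : HasStrictDerivAt G G' p) (hp : G p = p) (hG' : ‖G'‖ < 1) :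
    ∃ q : ℝ≥0, q < 1 ∧ ∀ᶠ r in 𝓝[>] (0 : ℝ), ∀ z ∈ Metric.ball p r, ∀ n,
      dist (G^[n] z) p ≤ q ^ n * dist z p := by
  obtain ⟨q, hG'q, hq⟩ := exists_between (show ‖G'‖₊ < 1 from hG')
  obtain ⟨s, hs, hlip⟩ := hG.hasStrictFDerivAt.exists_lipschitzOnWith_of_nnnorm_lt q (by simpa)
  obtain ⟨ε, hε, hεs⟩ := Metric.mem_nhds_iff.mp hs
  refine ⟨q, hq, ?_⟩
  filter_upwards [Ioo_mem_nhdsGT hε] with r hr z hz n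
  induction n with
  | zero => simp
  | succ n ih =>
    have hmem : G^[n] z ∈ s := hεs <| Metric.mem_ball.mpr <| calc
      dist (G^[n] z) p ≤ q ^ n * dist z p := ih
      _ ≤ dist z p := mul_le_of_le_one_left dist_nonneg (pow_le_one₀ q.2 hq.le)
      _ < ε := hz.out.trans hr.2
    have hstep := hlip.dist_le_mul _ hmem p (mem_of_mem_nhds hs)
    rw [hp] at hstep
    rw [Function.iterate_succ_apply', pow_succ', mul_assoc]
    exact hstep.trans (mul_le_mul_of_nonneg_left ih q.2)

lemma analyticAt_tsum_iterate_sub_complex {F G : ℂ → ℂ} {p : ℂ} (hF : AnalyticAt ℂ F p)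
    (hG : AnalyticAt ℂ G p) (hp : G p = p) (hG' : ‖deriv G p‖ < 1) :
    AnalyticAt ℂ (fun z => ∑' n, (F (G^[n + 1] z) - F p)) p := by
  obtain ⟨q, hq, hcontr⟩ := exists_eventually_dist_iterate_le hG.hasStrictDerivAt hp hG'
  obtain ⟨L, s, hs, hlip⟩ := hF.hasStrictDerivAt.hasStrictFDerivAt.exists_lipschitzOnWith
  have hgood : {z | AnalyticAt ℂ F z ∧ AnalyticAt ℂ G z} ∩ s ∈ 𝓝 p :=
    inter_mem (hF.eventually_analyticAt.and hG.eventually_analyticAt) hs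
  obtain ⟨ε, hε, hεgood⟩ := Metric.mem_nhds_iff.mp hgood
  obtain ⟨r, hiter, hr0, hrε⟩ := (hcontr.and (Ioo_mem_nhdsGT hε)).exists
  set U := Metric.ball p r
  have hU : U ⊆ {z | AnalyticAt ℂ F z ∧ AnalyticAt ℂ G z} ∩ s :=
    (Metric.ball_subset_ball hrε.le).trans hεgood
  have hbound {z : ℂ} (hz : z ∈ U) (n : ℕ) : dist (G^[n] z) p ≤ q ^ n * r :=
    (hiter z hz n).trans (by gcongr; exact hz.out.le)
  have hmaps : MapsTo G U U := fun z hz => Metric.mem_ball.mpr <| calc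
    dist (G z) p ≤ q ^ 1 * dist z p := hiter z hz 1
    _ ≤ dist z p := mul_le_of_le_one_left dist_nonneg (pow_le_one₀ q.2 hq.le)
    _ < r := hz
  refine DifferentiableOn.analyticAt (s := U) ?_ (Metric.ball_mem_nhds p hr0)
  refine Complex.differentiableOn_tsum_of_summable_norm (u := fun n => L * (q ^ (n + 1) * r))
    ?_ (fun n => ?_) Metric.isOpen_ball fun n z hz => ?_
  · have hgeom := (summable_nat_add_iff 1).mpr (summable_geometric_of_lt_one q.2 hq)
    exact (hgeom.mul_right r).mul_left _
  · have hFU : DifferentiableOn ℂ F U := fun z hz => (hU hz).1.1.differentiableWithinAt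
    have hGU : DifferentiableOn ℂ G U := fun z hz => (hU hz).1.2.differentiableWithinAt
    exact (hFU.comp (hGU.iterate hmaps (n + 1)) (hmaps.iterate (n + 1))).sub_const _
  · rw [← dist_eq_norm]
    refine (hlip.dist_le_mul _ (hU (hmaps.iterate (n + 1) hz)).2 p (mem_of_mem_nhds hs)).trans ?_
    gcongr
    exact hbound hz _

lemma analyticAt_tsum_iterate_sub {f τ : ℝ → ℝ} {p : ℝ} (hf : AnalyticAt ℝ f p)
    (hτ : AnalyticAt ℝ τ p) (hp : τ p = p) (hτ' : |deriv τ p| < 1) :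
    AnalyticAt ℝ (fun x => ∑' n, (f (τ^[n + 1] x) - f p)) p := by
  obtain ⟨F, hF, hFf⟩ := exists_analyticAt_complex_extension hf
  obtain ⟨G, hG, hGτ⟩ := exists_analyticAt_complex_extension hτ
  have hGp : G p = p := by rw [hGτ.self_of_nhds, hp]
  have hderiv : deriv G p = deriv τ p := by
    have hGreal : HasDerivAt (fun x : ℝ => (τ x : ℂ)) (deriv G p) p :=
      hG.differentiableAt.hasDerivAt.comp_ofReal.congr_of_eventuallyEq (hGτ.mono fun _ h => h.symm)
    exact hGreal.unique hτ.differentiableAt.hasDerivAt.ofReal_comp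
  have hG' : ‖deriv G p‖ < 1 := by rwa [hderiv, Complex.norm_real]
  obtain ⟨q, hq, hcontr⟩ := exists_eventually_dist_iterate_le hG.hasStrictDerivAt hGp hG'
  obtain ⟨ε, hε, hball⟩ := Metric.eventually_nhds_iff_ball.mp (hFf.and hGτ)
  obtain ⟨r, hiter, hr0, hrε⟩ := (hcontr.and (Ioo_mem_nhdsGT hε)).exists
  refine (analyticAt_tsum_iterate_sub_complex hF hG hGp hG').re_ofReal.congr ?_
  filter_upwards [Metric.ball_mem_nhds p hr0] with x hx
  have hxr : (x : ℂ) ∈ Metric.ball (p : ℂ) r := by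
    rwa [Metric.mem_ball, Complex.isometry_ofReal.dist_eq]
  have hmem {n : ℕ} (hn : G^[n] x = τ^[n] x) : τ^[n] x ∈ Metric.ball p ε := by
    rw [Metric.mem_ball, ← Complex.isometry_ofReal.dist_eq, ← hn]
    calc dist (G^[n] x) p ≤ q ^ n * dist (x : ℂ) p := hiter _ hxr n
      _ ≤ dist (x : ℂ) p := mul_le_of_le_one_left dist_nonneg (pow_le_one₀ q.2 hq.le)
      _ < ε := hxr.out.trans hrε
  have hreal (n : ℕ) : G^[n] x = τ^[n] x := by
    induction n with
    | zero => rfl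
    | succ n ih =>
      rw [Function.iterate_succ_apply', ih, (hball _ (hmem ih)).2, Function.iterate_succ_apply']
  have hterm (n : ℕ) : F (G^[n + 1] x) - F p = ↑(f (τ^[n + 1] x) - f p) := by
    rw [hreal, (hball _ (hmem (hreal _))).1, hFf.self_of_nhds, Complex.ofReal_sub]
  simp only [hterm]
  rw [← Complex.ofReal_tsum, Complex.ofReal_re]

lemma analyticAt_of_eq_add_comp {𝕜 : Type*} [NontriviallyNormedField 𝕜] [CompleteSpace 𝕜]
    {h φ τ : 𝕜 → 𝕜} {p : 𝕜} (hφ : ∀ x, AnalyticAt 𝕜 φ x)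
    (hτ : ∀ x, AnalyticAt 𝕜 τ x) (hh : ∀ x, h x = φ x + h (τ x))
    (hp : AnalyticAt 𝕜 h p) {x : 𝕜} (hx : Tendsto (fun n => τ^[n] x) atTop (𝓝 p)) :
    AnalyticAt 𝕜 h x := by
  obtain ⟨n, hn⟩ := (hx.eventually hp.eventually_analyticAt).exists
  induction n generalizing x with
  | zero => exact hn
  | succ n ih =>
    have hτx : AnalyticAt 𝕜 h (τ x) :=
      ih ((tendsto_add_atTop_iff_nat 1).mpr hx) hn
    exact ((hφ x).add (hτx.comp (hτ x))).congr (.of_forall fun y => (hh y).symm)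

end Analyticity

section ExpandingMaps

lemma periodic_deriv_of_map_add {F : ℝ → ℝ} {a b : ℝ} (hF : ∀ x, F (x + a) = F x + b) :
    Function.Periodic (deriv F) a := fun x => by
  rw [← deriv_comp_add_const, funext hF, deriv_add_const]

lemma exists_lipschitzWith_of_periodic {f : ℝ → ℝ} {a : ℝ} (ha : a ≠ 0)
    (hper : Function.Periodic f a) (hf : ContDiff ℝ 1 f) : ∃ K, LipschitzWith K f := by
  have hper' : Function.Periodic (deriv f) a :=
    periodic_deriv_of_map_add (b := 0) fun x => by rw [hper, add_zero]
  obtain ⟨K, hK⟩ := (hper'.isBounded_of_continuous ha (hf.continuous_deriv le_rfl)).exists_norm_le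
  refine ⟨K.toNNReal, lipschitzWith_of_nnnorm_deriv_le (hf.differentiable one_ne_zero) fun x => ?_⟩
  exact NNReal.le_toNNReal_of_coe_le (hK _ (mem_range_self x))

variable {T τ : ℝ → ℝ} {a b : ℝ}

lemma exists_one_lt_forall_le_deriv (ha : a ≠ 0) (hT : ContDiff ℝ 1 T)
    (hab : ∀ x, T (x + a) = T x + b) (hexp : ∀ x, 1 < deriv T x) :
    ∃ κ > 1, ∀ x, κ ≤ deriv T x := by
  obtain ⟨_, ⟨x₀, rfl⟩, hmin⟩ := ((periodic_deriv_of_map_add hab).compact_of_continuous ha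
    (hT.continuous_deriv le_rfl)).exists_isLeast (range_nonempty _)
  exact ⟨deriv T x₀, hexp x₀, fun x => hmin (mem_range_self x)⟩

lemma antilipschitzWith_of_le_deriv {κ : ℝ≥0} (hκ : 0 < κ) (hT : Differentiable ℝ T)
    (hderiv : ∀ x, κ ≤ deriv T x) : AntilipschitzWith κ⁻¹ T := by
  refine AntilipschitzWith.of_le_mul_dist fun x y => ?_
  wlog hxy : x ≤ y generalizing x y
  · simpa only [dist_comm] using this y x (le_of_not_ge hxy)
  have hmvt := mul_sub_le_image_sub_of_le_deriv hT hderiv hxy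
  rw [NNReal.coe_inv, le_inv_mul_iff₀ (NNReal.coe_pos.mpr hκ), dist_comm x, dist_comm (T x),
    Real.dist_eq, Real.dist_eq, abs_of_nonneg (sub_nonneg.mpr hxy)]
  exact hmvt.trans (le_abs_self _)

lemma exists_lt_one_lipschitzWith_of_rightInverse (ha : a ≠ 0) (hT : ContDiff ℝ 1 T)
    (hab : ∀ x, T (x + a) = T x + b) (hexp : ∀ x, 1 < deriv T x)
    (hτ : Function.RightInverse τ T) : ∃ q < 1, LipschitzWith q τ := by
  obtain ⟨κ, hκ, hderiv⟩ := exists_one_lt_forall_le_deriv ha hT hab hexp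
  lift κ to ℝ≥0 using zero_le_one.trans hκ.le
  have hκ1 : 1 < κ := hκ
  exact ⟨κ⁻¹, inv_lt_one_of_one_lt₀ hκ1, (antilipschitzWith_of_le_deriv (zero_lt_one.trans hκ1)
    (hT.differentiable one_ne_zero) hderiv).to_rightInverse hτ⟩

lemma monotone_of_rightInverse (hT : StrictMono T) (hτ : Function.RightInverse τ T) :
    Monotone τ := fun x y hxy => hT.le_iff_le.mp (by rwa [hτ, hτ])

lemma map_add_of_inverse (hab : ∀ x, T (x + a) = T x + b) (hl : Function.LeftInverse τ T)
    (hr : Function.RightInverse τ T) (x : ℝ) : τ (x + b) = τ x + a := by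
  rw [← hl (τ x + a), hab, hr]

lemma analyticAt_of_inverse (hT : ∀ x, AnalyticAt ℝ T x) (hT' : ∀ x, deriv T x ≠ 0)
    (hl : Function.LeftInverse τ T) (hr : Function.RightInverse τ T) (x : ℝ) :
    AnalyticAt ℝ τ x := by
  rw [← hr x, ← analyticAt_comp_iff_of_deriv_ne_zero (hT _) (hT' _), hl.comp_eq_id]
  exact analyticAt_id

lemma analyticAt_adicSum_branchFamily {d : ℕ} {f : ℝ → ℝ} {q : ℝ≥0} {ℓ : ℕ → ℝ≥0}
    (hV : IsAdicFamily d (branchFamily τ f) ℓ) (hf : ∀ x, AnalyticAt ℝ f x)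
    (hτ : ∀ x, AnalyticAt ℝ τ x) (hτ0 : τ 0 = 0) (hq : q < 1) (hτq : LipschitzWith q τ) (x : ℝ) :
    AnalyticAt ℝ (adicSum (branchFamily τ f) 0) x := by
  have hcontr : ContractingWith q τ := ⟨hq, hτq⟩
  have hfix : 0 = hcontr.fixedPoint := hcontr.fixedPoint_unique hτ0
  have hderiv : |deriv τ 0| < 1 := (norm_deriv_le_of_lipschitz hτq).trans_lt hq
  refine analyticAt_of_eq_add_comp (p := 0)
    (fun y => ((hf (τ y)).comp (hτ y)).sub analyticAt_const) hτ
    (adicSum_branchFamily_eq_add hV hτ0) ?_ (hfix ▸ hcontr.tendsto_iterate_fixedPoint x)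
  refine (analyticAt_tsum_iterate_sub (hf 0) (hτ 0) hτ0 hderiv).congr (.of_forall fun y => ?_)
  simp only [adicSum_zero, branchFamily, Function.comp_apply, Function.iterate_fixed hτ0]

end ExpandingMaps

/-- **Transversality.** Let `T` be a real analytic orientation-preserving
expanding circle map of degree `d` with `T(0)=0` (lift `T̂`, `τ = T̂⁻¹`) and let `f` be a
real analytic real-valued function on the circle with 1-periodic lift `f̂`. Then either
`f` is real analytically cohomologous to a constant (`f = g∘T − g + c`, `g` real
analytic) and `h_i ≡ h_j` for all `i, j ∈ Σ_d`, or `h_i ≢ h_j` whenever `i ≠ j`. -/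
theorem stmt_13 (d : ℕ) (hd : 2 ≤ d)
    (That : ℝ → ℝ) (hTan : ∀ x, AnalyticAt ℝ That x) (hT0 : That 0 = 0)
    (hTdeg : ∀ x, That (x + 1) = That x + d)
    (hTexp : ∀ x, 1 < deriv That x)
    (tau : ℝ → ℝ) (htau1 : ∀ x, That (tau x) = x) (htau2 : ∀ x, tau (That x) = x)
    (fhat : ℝ → ℝ) (hfan : ∀ x, AnalyticAt ℝ fhat x)
    (hfper : Function.Periodic fhat 1) :
    ((∃ g : ℝ → ℝ, (∀ x, AnalyticAt ℝ g x) ∧ Function.Periodic g 1 ∧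
        ∃ c : ℝ, ∀ x, fhat x = g (That x) - g x + c) ∧
      ∀ i j : ℕ → Fin d,
        hFunR tau fhat (fun m => (i m : ℕ)) = hFunR tau fhat (fun m => (j m : ℕ))) ∨
    (∀ i j : ℕ → Fin d, i ≠ j →
        hFunR tau fhat (fun m => (i m : ℕ)) ≠ hFunR tau fhat (fun m => (j m : ℕ))) := by
  rw [or_iff_not_imp_right]
  push Not
  rintro ⟨i, j, hij, heq⟩
  have hpos (x : ℝ) : 0 < deriv That x := zero_lt_one.trans (hTexp x)
  have hτ : ∀ x, tau (x + d) = tau x + 1 := map_add_of_inverse hTdeg htau2 htau1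
  have hτ0 : tau 0 = 0 := by simpa only [hT0] using htau2 0
  have hmono : Monotone tau := monotone_of_rightInverse (strictMono_of_deriv_pos hpos) htau1
  have hτan := analyticAt_of_inverse hTan (fun x => (hpos x).ne') htau2 htau1
  obtain ⟨q, hq, hτq⟩ := exists_lt_one_lipschitzWith_of_rightInverse one_ne_zero
    (AnalyticOnNhd.contDiff fun x _ => hTan x) hTdeg hTexp htau1
  obtain ⟨K, hfK⟩ := exists_lipschitzWith_of_periodic one_ne_zero hfper
    (AnalyticOnNhd.contDiff fun x _ => hfan x)
  have hV := isAdicFamily_branchFamily hτ hq hτq hfper hfK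
  have hper :=
    periodic_adicSum_branchFamily_of_hFunR_eq hTdeg htau2 hτ hτ0 hmono hfper hfK hV hij heq
  refine ⟨⟨adicSum (branchFamily tau fhat) 0,
    analyticAt_adicSum_branchFamily hV hfan hτan hτ0 hq hτq, hper, fhat 0, fun x => ?_⟩,
    fun i j => ?_⟩
  · rw [adicSum_branchFamily_map hV hτ0 htau2]
    ring
  · rw [hFunR_eq_of_periodic hτ hV hper, hFunR_eq_of_periodic hτ hV hper]
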